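/- arXiv:2208.04442 — 3 statements merged into one kernel-verified Lean document; each statement's English description precedes it below -/
import Mathlib

section
/- Theorem 3.3 (conservation of the Energy–Momentum tensor): let L₀ : ℝ → (Fin D → ℝ) → ℝ be a smooth spacetime-independent Lagrangian density with arguments (u, p), and let φ be a smooth solution of the Euler–Lagrange equation for the Lagrangian density L(x,u,p) := L₀(u,p). Define the Energy–Momentum tensor T^μ_ν x := L₀_{p_μ}(φ x, ∇φ x) · ∂_ν φ x − (if μ = ν then L₀(φ x, ∇φ x) else 0). Then for each fixed ν, the current μ ↦ T^μ_ν is conserved: Σ_μ ∂_μ (fun y ↦ T^μ_ν y) x = 0 for all x. -/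
open scoped BigOperators

noncomputable section

/-- Spacetime partial derivative `∂_μ F x`. -/
def pd {D : ℕ} (F : (Fin D → ℝ) → ℝ) (μ : Fin D) (x : Fin D → ℝ) : ℝ :=
  fderiv ℝ F x (Pi.single μ 1)

/-- Gradient of a field, `∇φ x = fun ν ↦ ∂_ν φ x`. -/
def grad {D : ℕ} (φ : (Fin D → ℝ) → ℝ) (x : Fin D → ℝ) : Fin D → ℝ :=
  fun ν => pd φ ν x

/-- Partial derivative of a spacetime-independent Lagrangian in `u`. -/
def Lu0 {D : ℕ} (L₀ : ℝ → (Fin D → ℝ) → ℝ) (u : ℝ) (p : Fin D → ℝ) : ℝ :=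
  deriv (fun v => L₀ v p) u

/-- Partial derivative of a spacetime-independent Lagrangian in the μ-th component of `p`. -/
def Lp0 {D : ℕ} (L₀ : ℝ → (Fin D → ℝ) → ℝ) (μ : Fin D) (u : ℝ) (p : Fin D → ℝ) : ℝ :=
  fderiv ℝ (L₀ u) p (Pi.single μ 1)

theorem aux_Lp {D : ℕ} (L₀ : ℝ → (Fin D → ℝ) → ℝ)
    (hL : ContDiff ℝ (⊤ : ℕ∞) (fun q : ℝ × (Fin D → ℝ) => L₀ q.1 q.2))
    (μ : Fin D) (u : ℝ) (p : Fin D → ℝ) :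
    Lp0 L₀ μ u p = fderiv ℝ (fun q : ℝ × (Fin D → ℝ) => L₀ q.1 q.2) (u, p)
      (0, Pi.single μ 1) := by
  have h1 : HasFDerivAt (fun q : ℝ × (Fin D → ℝ) => L₀ q.1 q.2)
      (fderiv ℝ (fun q : ℝ × (Fin D → ℝ) => L₀ q.1 q.2) (u, p)) (u, p) :=
    (hL.differentiable (by simp) _).hasFDerivAt
  have h2 := h1.comp p (hasFDerivAt_prodMk_right (𝕜 := ℝ) u p)
  have h3 : fderiv ℝ (L₀ u) p = _ := h2.fderiv
  rw [Lp0, h3]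
  simp

theorem aux_Lu {D : ℕ} (L₀ : ℝ → (Fin D → ℝ) → ℝ)
    (hL : ContDiff ℝ (⊤ : ℕ∞) (fun q : ℝ × (Fin D → ℝ) => L₀ q.1 q.2))
    (u : ℝ) (p : Fin D → ℝ) :
    Lu0 L₀ u p = fderiv ℝ (fun q : ℝ × (Fin D → ℝ) => L₀ q.1 q.2) (u, p) (1, 0) := by
  have h1 : HasFDerivAt (fun q : ℝ × (Fin D → ℝ) => L₀ q.1 q.2)
      (fderiv ℝ (fun q : ℝ × (Fin D → ℝ) => L₀ q.1 q.2) (u, p)) (u, p) :=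
    (hL.differentiable (by simp) _).hasFDerivAt
  have h2 := h1.comp u (hasFDerivAt_prodMk_left (𝕜 := ℝ) u p)
  have h3 : fderiv ℝ (fun v => L₀ v p) u = _ := h2.fderiv
  rw [Lu0, ← fderiv_apply_one_eq_deriv, h3]
  simp

theorem aux_pd {D : ℕ} (φ : (Fin D → ℝ) → ℝ) (hφ : ContDiff ℝ (⊤ : ℕ∞) φ) (μ : Fin D) :
    ContDiff ℝ (⊤ : ℕ∞) (fun y => pd φ μ y) := by
  unfold pd
  exact (hφ.fderiv_right (m := (⊤ : ℕ∞)) (by simp)).clm_apply contDiff_const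

theorem aux_comm {D : ℕ} (φ : (Fin D → ℝ) → ℝ) (hφ : ContDiff ℝ (⊤ : ℕ∞) φ)
    (μ ν : Fin D) (x : Fin D → ℝ) :
    pd (fun y => pd φ μ y) ν x = pd (fun y => pd φ ν y) μ x := by
  have hd : DifferentiableAt ℝ (fderiv ℝ φ) x :=
    ((hφ.fderiv_right (m := (⊤ : ℕ∞)) (by simp)).differentiable (by simp)) x
  have hs : IsSymmSndFDerivAt ℝ φ x := by
    apply hφ.contDiffAt.isSymmSndFDerivAt
    simp only [minSmoothness_of_isRCLikeNormedField]
    exact WithTop.coe_le_coe.2 (le_top : (2 : ℕ∞) ≤ ⊤)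
  have key : ∀ a b : Fin D, pd (fun y => pd φ a y) b x =
      fderiv ℝ (fderiv ℝ φ) x (Pi.single b 1) (Pi.single a 1) := by
    intro a b
    unfold pd
    rw [fderiv_clm_apply hd (by fun_prop)]
    simp
  rw [key, key]
  exact hs.eq _ _

/-- Theorem 3.3: conservation of the Energy–Momentum tensor for
spacetime-independent theories. -/
theorem energy_momentum_tensor_conserved {D : ℕ} (hD : 1 ≤ D)
    (L₀ : ℝ → (Fin D → ℝ) → ℝ)
    (hL : ContDiff ℝ (⊤ : ℕ∞) (fun q : ℝ × (Fin D → ℝ) => L₀ q.1 q.2))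
    (φ : (Fin D → ℝ) → ℝ) (hφ : ContDiff ℝ (⊤ : ℕ∞) φ)
    (hEL : ∀ x, Lu0 L₀ (φ x) (grad φ x) =
      ∑ μ, pd (fun y => Lp0 L₀ μ (φ y) (grad φ y)) μ x) :
    ∀ (ν : Fin D) (x : Fin D → ℝ),
      ∑ μ, pd (fun y =>
        Lp0 L₀ μ (φ y) (grad φ y) * pd φ ν y -
          (if μ = ν then L₀ (φ y) (grad φ y) else 0)) μ x = 0 := by
  intro ν x
  have hg : ContDiff ℝ (⊤ : ℕ∞) (fun y => (φ y, grad φ y)) :=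
    hφ.prodMk (contDiff_pi.2 fun μ => aux_pd φ hφ μ)
  have hLp : ∀ μ, Differentiable ℝ (fun y => Lp0 L₀ μ (φ y) (grad φ y)) := by
    intro μ
    simp only [aux_Lp L₀ hL]
    exact (((hL.fderiv_right (m := (⊤ : ℕ∞)) (by simp)).comp hg).clm_apply
      contDiff_const).differentiable (by simp)
  have hC : Differentiable ℝ (fun y => L₀ (φ y) (grad φ y)) :=
    (hL.comp hg).differentiable (by simp)
  have hP : ∀ μ, Differentiable ℝ (fun y => pd φ μ y) := fun μ =>
    (aux_pd φ hφ μ).differentiable (by simp)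
  have chain : pd (fun y => L₀ (φ y) (grad φ y)) ν x =
      Lu0 L₀ (φ x) (grad φ x) * pd φ ν x +
        ∑ μ, Lp0 L₀ μ (φ x) (grad φ x) * pd (fun y => pd φ μ y) ν x := by
    have h1 : HasFDerivAt (fun q : ℝ × (Fin D → ℝ) => L₀ q.1 q.2)
        (fderiv ℝ (fun q : ℝ × (Fin D → ℝ) => L₀ q.1 q.2) (φ x, grad φ x))
        (φ x, grad φ x) := (hL.differentiable (by simp) _).hasFDerivAt
    have h2 : HasFDerivAt (grad φ)
        (ContinuousLinearMap.pi fun μ => fderiv ℝ (fun y => pd φ μ y) x) x :=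
      hasFDerivAt_pi.2 fun μ => (hP μ x).hasFDerivAt
    have h3 := h1.comp x (((hφ.differentiable (by simp)) x).hasFDerivAt.prodMk h2)
    have h4 : fderiv ℝ (fun y => L₀ (φ y) (grad φ y)) x = _ := h3.fderiv
    have h5 : (pd φ ν x, fun μ => pd (fun y => pd φ μ y) ν x) =
        pd φ ν x • ((1 : ℝ), (0 : Fin D → ℝ)) +
        ∑ μ, pd (fun y => pd φ μ y) ν x • ((0 : ℝ), (Pi.single μ 1 : Fin D → ℝ)) := by
      ext i
      · simp [Prod.fst_sum]
      · simp [Prod.snd_sum, Finset.sum_apply, Pi.single_apply]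
    have h6 : pd (fun y => L₀ (φ y) (grad φ y)) ν x =
        fderiv ℝ (fun q : ℝ × (Fin D → ℝ) => L₀ q.1 q.2) (φ x, grad φ x)
          (pd φ ν x, fun μ => pd (fun y => pd φ μ y) ν x) := by
      conv_lhs => rw [pd, h4]
      rfl
    rw [h6, h5, map_add, map_sum]
    simp only [map_smul, aux_Lp L₀ hL, aux_Lu L₀ hL, smul_eq_mul]
    simp only [mul_comm]
  have term : ∀ μ, pd (fun y => Lp0 L₀ μ (φ y) (grad φ y) * pd φ ν y -
          (if μ = ν then L₀ (φ y) (grad φ y) else 0)) μ x =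
      Lp0 L₀ μ (φ x) (grad φ x) * pd (fun y => pd φ μ y) ν x +
      pd (fun y => Lp0 L₀ μ (φ y) (grad φ y)) μ x * pd φ ν x -
      (if μ = ν then pd (fun y => L₀ (φ y) (grad φ y)) ν x else 0) := by
    intro μ
    have hm := ((hLp μ x).hasFDerivAt).mul ((hP ν x).hasFDerivAt)
    rw [aux_comm φ hφ μ ν x]
    by_cases h : μ = ν
    · subst h
      simp only [if_true]
      have := (hm.sub (hC x).hasFDerivAt).fderiv
      conv_lhs => rw [pd]
      erw [this]
      simp [pd, mul_comm]
    · simp only [h, if_false, sub_zero]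
      have := hm.fderiv
      conv_lhs => rw [pd]
      erw [this]
      simp [pd, mul_comm]
  rw [Finset.sum_congr rfl fun μ _ => term μ, Finset.sum_sub_distrib, Finset.sum_add_distrib,
    ← Finset.sum_mul, ← hEL x]
  simp only [Finset.sum_ite_eq', Finset.mem_univ, if_true, chain]
  ring

end
end

section
/- Theorem 3.7, second current: under the same hypotheses (D ≠ 2, Δ := (D−2)/2, k := 2·D/(D−2), U smooth with u·U'(u) = k·U(u) for all u, and φ a smooth solution of □φ + U'(φ) = 0), define L x := (1/2)·Σ_{μ,ν} η μ ν · ∂_μ φ x · ∂_ν φ x − U(φ x), T^{μν} x := ∂^μ φ x · ∂^ν φ x − η μ ν · L x, and J^μ x := Δ · φ x · ∂^μ φ x + Σ_α (x α) · (∂^μ φ x · ∂_α φ x − (if μ = α then L x else 0)). Then for each fixed ν, the current H^{μν} x := (1/2)·Δ·η μ ν·(φ x)² + (1/2)·(Σ_{α,β} η α β · x α · x β)·T^{μν} x − (x ν)·J^μ x is conserved: Σ_μ ∂_μ (fun y ↦ H^{μν} y) x = 0 for all x. -/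
open scoped BigOperators

noncomputable section

/-- Minkowski metric on `Fin D`. -/
def eta (D : ℕ) (μ ν : Fin D) : ℝ :=
  if μ = ν then (if (μ : ℕ) = 0 then 1 else -1) else 0

/-- Raised-index partial derivative `∂^μ F x`. -/
def pdu {D : ℕ} (F : (Fin D → ℝ) → ℝ) (μ : Fin D) (x : Fin D → ℝ) : ℝ :=
  ∑ ν, eta D μ ν * pd F ν x

/-- d'Alembertian `□F x`. -/
def box {D : ℕ} (F : (Fin D → ℝ) → ℝ) (x : Fin D → ℝ) : ℝ :=
  ∑ μ, pd (fun y => pdu F μ y) μ x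

/-- The canonical Lagrangian `(1/2) ∂_μφ ∂^μφ − U(φ)`. -/
def Lag {D : ℕ} (U : ℝ → ℝ) (φ : (Fin D → ℝ) → ℝ) (x : Fin D → ℝ) : ℝ :=
  (1/2) * ∑ μ, ∑ ν, eta D μ ν * pd φ μ x * pd φ ν x - U (φ x)

/-- Contravariant Energy–Momentum tensor `T^{μν}`. -/
def EMTup {D : ℕ} (U : ℝ → ℝ) (φ : (Fin D → ℝ) → ℝ) (μ ν : Fin D) (x : Fin D → ℝ) : ℝ :=
  pdu φ μ x * pdu φ ν x - eta D μ ν * Lag U φ x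

/-- Dilation current `J^μ`. -/
def Jcur {D : ℕ} (U : ℝ → ℝ) (φ : (Fin D → ℝ) → ℝ) (μ : Fin D) (x : Fin D → ℝ) : ℝ :=
  ((D : ℝ) - 2) / 2 * φ x * pdu φ μ x +
    ∑ α, x α * (pdu φ μ x * pd φ α x - (if μ = α then Lag U φ x else 0))


def Hpd {D : ℕ} (F : (Fin D → ℝ) → ℝ) (x : Fin D → ℝ) (g : Fin D → ℝ) : Prop :=
  DifferentiableAt ℝ F x ∧ ∀ μ, pd F μ x = g μ

namespace Hpd
variable {D : ℕ} {F G : (Fin D → ℝ) → ℝ} {x : Fin D → ℝ} {f g : Fin D → ℝ}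

theorem congr' (h : Hpd F x f) (e : ∀ μ, f μ = g μ) : Hpd F x g :=
  ⟨h.1, fun μ => (h.2 μ).trans (e μ)⟩

theorem add (hF : Hpd F x f) (hG : Hpd G x g) :
    Hpd (fun y => F y + G y) x (fun μ => f μ + g μ) := by
  refine ⟨hF.1.add hG.1, fun μ => ?_⟩
  have := hF.2 μ
  have := hG.2 μ
  unfold pd at *
  rw [fderiv_fun_add hF.1 hG.1]
  simp [*]

theorem sub (hF : Hpd F x f) (hG : Hpd G x g) :
    Hpd (fun y => F y - G y) x (fun μ => f μ - g μ) := by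
  refine ⟨hF.1.sub hG.1, fun μ => ?_⟩
  have := hF.2 μ
  have := hG.2 μ
  unfold pd at *
  rw [fderiv_fun_sub hF.1 hG.1]
  simp [*]

theorem mul (hF : Hpd F x f) (hG : Hpd G x g) :
    Hpd (fun y => F y * G y) x (fun μ => f μ * G x + F x * g μ) := by
  refine ⟨hF.1.mul hG.1, fun μ => ?_⟩
  have := hF.2 μ
  have := hG.2 μ
  unfold pd at *
  rw [fderiv_fun_mul hF.1 hG.1]
  simp [*]
  ring

theorem const (c : ℝ) : Hpd (fun _ => c) x (fun _ => 0) := by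
  refine ⟨differentiableAt_const c, fun μ => ?_⟩
  simp [pd]

theorem cmul (c : ℝ) (hG : Hpd G x g) :
    Hpd (fun y => c * G y) x (fun μ => c * g μ) :=
  ((const c).mul hG).congr' (by intro μ; ring)

theorem coord (α : Fin D) : Hpd (fun y : Fin D → ℝ => y α) x (fun μ => if α = μ then 1 else 0) := by
  refine ⟨by fun_prop, fun μ => ?_⟩
  have : HasFDerivAt (fun y : Fin D → ℝ => y α) (ContinuousLinearMap.proj (R := ℝ) (φ := fun _ : Fin D => ℝ) α) x :=
    (ContinuousLinearMap.proj (R := ℝ) (φ := fun _ : Fin D => ℝ) α).hasFDerivAt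
  unfold pd
  rw [this.fderiv]
  simp [Pi.single_apply]

theorem sum {F : Fin D → (Fin D → ℝ) → ℝ} {f : Fin D → Fin D → ℝ} (h : ∀ α, Hpd (F α) x (f α)) :
    Hpd (fun y => ∑ α, F α y) x (fun μ => ∑ α, f α μ) := by
  refine ⟨DifferentiableAt.fun_sum fun α _ => (h α).1, fun μ => ?_⟩
  have := fun α => (h α).2 μ
  unfold pd at *
  rw [fderiv_fun_sum fun α _ => (h α).1]
  simp [this]

theorem comp {U : ℝ → ℝ} (hU : DifferentiableAt ℝ U (F x)) (hF : Hpd F x f) :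
    Hpd (fun y => U (F y)) x (fun μ => deriv U (F x) * f μ) := by
  have h := hU.hasDerivAt.comp_hasFDerivAt x hF.1.hasFDerivAt
  refine ⟨h.differentiableAt, fun μ => ?_⟩
  have h2 := hF.2 μ
  unfold pd at *
  have h3 := h.fderiv
  simp only [Function.comp_def] at h3
  rw [h3]
  simp [h2]

end Hpd

def ee {D : ℕ} (μ : Fin D) : ℝ := if (μ : ℕ) = 0 then 1 else -1

theorem ee_sq {D : ℕ} (μ : Fin D) : ee μ * ee μ = 1 := by
  unfold ee; split_ifs <;> norm_num

theorem eta_eq {D : ℕ} (μ ν : Fin D) : eta D μ ν = if μ = ν then ee μ else 0 := rfl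

theorem pdu_eq {D : ℕ} (F : (Fin D → ℝ) → ℝ) (μ : Fin D) (x : Fin D → ℝ) :
    pdu F μ x = ee μ * pd F μ x := by
  simp [pdu, eta_eq]

theorem Lag_eq {D : ℕ} (U : ℝ → ℝ) (φ : (Fin D → ℝ) → ℝ) (x : Fin D → ℝ) :
    Lag U φ x = (1/2) * ∑ μ, ee μ * (pd φ μ x * pd φ μ x) - U (φ x) := by
  simp [Lag, eta_eq, mul_assoc]

theorem Jcur_eq {D : ℕ} (U : ℝ → ℝ) (φ : (Fin D → ℝ) → ℝ) (μ : Fin D) (x : Fin D → ℝ) :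
    Jcur U φ μ x = ((D : ℝ) - 2) / 2 * (φ x * (ee μ * pd φ μ x)) +
      ee μ * (pd φ μ x * ∑ α, x α * pd φ α x) - x μ * Lag U φ x := by
  simp only [Jcur, pdu_eq, mul_sub, Finset.sum_sub_distrib, Finset.mul_sum]
  simp only [mul_ite, mul_zero, Finset.sum_ite_eq, Finset.mem_univ, if_true]
  have : ∀ α, x α * (ee μ * pd φ μ x * pd φ α x) = ee μ * (pd φ μ x * (x α * pd φ α x)) := by
    intro α; ring
  simp only [this]
  ring

theorem two_le_smooth : (2 : WithTop ℕ∞) ≤ ((⊤ : ℕ∞) : WithTop ℕ∞) :=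
  WithTop.coe_le_coe.2 (le_top : (2 : ℕ∞) ≤ ⊤)

theorem hpd_phi {D : ℕ} {φ : (Fin D → ℝ) → ℝ} (hφ : ContDiff ℝ (⊤ : ℕ∞) φ) (x : Fin D → ℝ) :
    Hpd φ x (fun μ => pd φ μ x) :=
  ⟨(hφ.differentiable (by simp)) x, fun _ => rfl⟩

theorem hpd_pd {D : ℕ} {φ : (Fin D → ℝ) → ℝ} (hφ : ContDiff ℝ (⊤ : ℕ∞) φ) (α : Fin D)
    (x : Fin D → ℝ) : Hpd (pd φ α) x (fun μ => pd (pd φ α) μ x) := by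
  refine ⟨?_, fun _ => rfl⟩
  have h : ContDiff ℝ 1 (fderiv ℝ φ) := hφ.fderiv_right (by rw [one_add_one_eq_two]; exact two_le_smooth)
  have h2 := h.differentiable (by simp)
  unfold pd
  exact (h2 x).clm_apply (differentiableAt_const _)

theorem pd_symm {D : ℕ} {φ : (Fin D → ℝ) → ℝ} (hφ : ContDiff ℝ (⊤ : ℕ∞) φ) (α μ : Fin D)
    (x : Fin D → ℝ) : pd (pd φ α) μ x = pd (pd φ μ) α x := by
  have h : ContDiff ℝ 1 (fderiv ℝ φ) := hφ.fderiv_right (by rw [one_add_one_eq_two]; exact two_le_smooth)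
  have h2 := h.differentiable (by simp)
  have key : ∀ α μ, pd (pd φ α) μ x = fderiv ℝ (fderiv ℝ φ) x (Pi.single μ 1) (Pi.single α 1) := by
    intro α μ
    unfold pd
    rw [fderiv_clm_apply (h2 x) (differentiableAt_const _)]
    simp
  rw [key, key]
  have hs : IsSymmSndFDerivAt ℝ φ x := by
    apply hφ.contDiffAt.isSymmSndFDerivAt
    simpa using two_le_smooth
  exact hs _ _

theorem hpd_Lag {D : ℕ} {U : ℝ → ℝ} (hU : ContDiff ℝ (⊤ : ℕ∞) U)
    {φ : (Fin D → ℝ) → ℝ} (hφ : ContDiff ℝ (⊤ : ℕ∞) φ) (x : Fin D → ℝ) :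
    Hpd (Lag U φ) x (fun μ => ∑ α, ee α * (pd φ α x * pd (pd φ α) μ x)
      - deriv U (φ x) * pd φ μ x) := by
  have e : Lag U φ = fun x => (1/2) * ∑ μ, ee μ * (pd φ μ x * pd φ μ x) - U (φ x) :=
    funext (Lag_eq U φ)
  rw [e]
  refine (((Hpd.sum fun α => ((hpd_pd hφ α x).mul (hpd_pd hφ α x)).cmul (ee α)).cmul (1/2)).sub
    (Hpd.comp (U := U) ((hU.differentiable (by simp)) _) (hpd_phi hφ x))).congr' ?_
  intro μ
  rw [Finset.mul_sum]
  congr 1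
  apply Finset.sum_congr rfl
  intros; ring

theorem box_eq {D : ℕ} {φ : (Fin D → ℝ) → ℝ} (hφ : ContDiff ℝ (⊤ : ℕ∞) φ) (x : Fin D → ℝ) :
    box φ x = ∑ μ, ee μ * pd (pd φ μ) μ x := by
  unfold box
  apply Finset.sum_congr rfl
  intro μ _
  simp only [pdu_eq]
  exact ((hpd_pd hφ μ x).cmul (ee μ)).2 μ

theorem hpd_T {D : ℕ} {U : ℝ → ℝ} (hU : ContDiff ℝ (⊤ : ℕ∞) U)
    {φ : (Fin D → ℝ) → ℝ} (hφ : ContDiff ℝ (⊤ : ℕ∞) φ) (x : Fin D → ℝ) (μ ν : Fin D) :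
    Hpd (EMTup U φ μ ν) x (fun κ => ee μ * pd (pd φ μ) κ x * (ee ν * pd φ ν x) +
      ee μ * pd φ μ x * (ee ν * pd (pd φ ν) κ x) - eta D μ ν * pd (Lag U φ) κ x) := by
  have e : EMTup U φ μ ν = fun x => (ee μ * pd φ μ x) * (ee ν * pd φ ν x) - eta D μ ν * Lag U φ x := by
    funext x; simp [EMTup, pdu_eq]
  rw [e]
  exact (((hpd_pd hφ μ x).cmul _).mul ((hpd_pd hφ ν x).cmul _)).sub
    (Hpd.cmul _ ⟨(hpd_Lag hU hφ x).1, fun _ => rfl⟩)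

theorem div_T {D : ℕ} {U : ℝ → ℝ} (hU : ContDiff ℝ (⊤ : ℕ∞) U)
    {φ : (Fin D → ℝ) → ℝ} (hφ : ContDiff ℝ (⊤ : ℕ∞) φ)
    (hEL : ∀ x, box φ x + deriv U (φ x) = 0) (x : Fin D → ℝ) (ν : Fin D) :
    ∑ μ, pd (EMTup U φ μ ν) μ x = 0 := by
  simp only [fun μ => (hpd_T hU hφ x μ ν).2 μ]
  rw [Finset.sum_sub_distrib, Finset.sum_add_distrib, ← Finset.sum_mul, ← box_eq hφ]
  simp only [eta_eq, ite_mul, zero_mul, Finset.sum_ite_eq', Finset.mem_univ, if_true]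
  rw [(hpd_Lag hU hφ x).2 ν]
  have h1 : ∑ μ, ee μ * pd φ μ x * (ee ν * pd (pd φ ν) μ x) =
      ee ν * ∑ α, ee α * (pd φ α x * pd (pd φ α) ν x) := by
    rw [Finset.mul_sum]
    apply Finset.sum_congr rfl
    intro μ _
    rw [pd_symm hφ ν μ]; ring
  rw [h1]
  linear_combination (ee ν * pd φ ν x) * hEL x

theorem hpd_J {D : ℕ} {U : ℝ → ℝ} (hU : ContDiff ℝ (⊤ : ℕ∞) U)
    {φ : (Fin D → ℝ) → ℝ} (hφ : ContDiff ℝ (⊤ : ℕ∞) φ) (x : Fin D → ℝ) (μ : Fin D) :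
    Hpd (Jcur U φ μ) x (fun κ => ((D : ℝ) - 2) / 2 * (pd φ κ x * (ee μ * pd φ μ x)
        + φ x * (ee μ * pd (pd φ μ) κ x)) +
      ee μ * (pd (pd φ μ) κ x * (∑ α, x α * pd φ α x) + pd φ μ x *
        (pd φ κ x + ∑ α, x α * pd (pd φ α) κ x))
      - ((if μ = κ then 1 else 0) * Lag U φ x + x μ * pd (Lag U φ) κ x)) := by
  rw [funext (Jcur_eq U φ μ)]
  have hS : Hpd (fun x => ∑ α, x α * pd φ α x) x
      (fun κ => pd φ κ x + ∑ α, x α * pd (pd φ α) κ x) := by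
    refine (Hpd.sum fun α => (Hpd.coord α).mul (hpd_pd hφ α x)).congr' ?_
    intro κ
    rw [Finset.sum_add_distrib]
    simp
  exact ((((hpd_phi hφ x).mul ((hpd_pd hφ μ x).cmul _)).cmul _).add
    (((hpd_pd hφ μ x).mul hS).cmul _)).sub
    ((Hpd.coord μ).mul ⟨(hpd_Lag hU hφ x).1, fun _ => rfl⟩)

theorem div_J {D : ℕ} (hD2 : D ≠ 2) {U : ℝ → ℝ} (hU : ContDiff ℝ (⊤ : ℕ∞) U)
    (hhom : ∀ u : ℝ, u * deriv U u = (2 * (D : ℝ) / ((D : ℝ) - 2)) * U u)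
    {φ : (Fin D → ℝ) → ℝ} (hφ : ContDiff ℝ (⊤ : ℕ∞) φ)
    (hEL : ∀ x, box φ x + deriv U (φ x) = 0) (x : Fin D → ℝ) :
    ∑ μ, pd (Jcur U φ μ) μ x = 0 := by
  have hd : (D : ℝ) - 2 ≠ 0 := by
    intro h
    apply hD2
    have : (D : ℝ) = 2 := by linarith
    exact_mod_cast this
  have hh : ((D : ℝ) - 2) / 2 * (φ x * deriv U (φ x)) = D * U (φ x) := by
    rw [hhom]; field_simp
  simp only [fun μ => (hpd_J hU hφ x μ).2 μ, (hpd_Lag hU hφ x).2, if_true]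
  have hL := Lag_eq U φ x
  have hB := box_eq hφ x
  have hE := hEL x
  have hC : ∑ μ, ∑ α, ee μ * (pd φ μ x * (x α * pd (pd φ α) μ x)) =
      ∑ μ, x μ * ∑ α, ee α * (pd φ α x * pd (pd φ α) μ x) := by
    rw [Finset.sum_comm]
    apply Finset.sum_congr rfl
    intro μ _
    rw [Finset.mul_sum]
    apply Finset.sum_congr rfl
    intro α _
    rw [pd_symm hφ μ α]; ring
  set S := ∑ α, x α * pd φ α x with hS
  have key : ∀ μ, ((D : ℝ) - 2) / 2 * (pd φ μ x * (ee μ * pd φ μ x)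
        + φ x * (ee μ * pd (pd φ μ) μ x)) +
      ee μ * (pd (pd φ μ) μ x * S + pd φ μ x *
        (pd φ μ x + ∑ α, x α * pd (pd φ α) μ x))
      - (1 * Lag U φ x + x μ * (∑ α, ee α * (pd φ α x * pd (pd φ α) μ x)
      - deriv U (φ x) * pd φ μ x)) =
      (D / 2 : ℝ) * (ee μ * (pd φ μ x * pd φ μ x)) +
      (((D : ℝ) - 2) / 2 * φ x + S) * (ee μ * pd (pd φ μ) μ x) +
      ∑ α, ee μ * (pd φ μ x * (x α * pd (pd φ α) μ x)) - Lag U φ x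
      - x μ * ∑ α, ee α * (pd φ α x * pd (pd φ α) μ x) + deriv U (φ x) * (x μ * pd φ μ x) := by
    intro μ
    simp only [← Finset.mul_sum]
    ring
  simp only [key]
  simp only [Finset.sum_add_distrib, Finset.sum_sub_distrib]
  rw [hC, ← Finset.mul_sum, ← Finset.mul_sum, ← Finset.mul_sum, ← hB, ← hS]
  simp only [Finset.sum_const, Finset.card_univ, Fintype.card_fin, nsmul_eq_mul]
  rw [hL]
  linear_combination (((D : ℝ) - 2) / 2 * φ x + S) * hE - hh

theorem X_eq {D : ℕ} (y : Fin D → ℝ) :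
    ∑ α, ∑ β, eta D α β * y α * y β = ∑ α, ee α * (y α * y α) := by
  simp [eta_eq, mul_assoc]

/-- Theorem 3.7, second current: the tensor `H^{μν}` is conserved in its first index. -/
theorem homogeneous_potential_second_current {D : ℕ} (hD : 1 ≤ D) (hD2 : D ≠ 2)
    (U : ℝ → ℝ) (hU : ContDiff ℝ (⊤ : ℕ∞) U)
    (hhom : ∀ u : ℝ, u * deriv U u = (2 * (D : ℝ) / ((D : ℝ) - 2)) * U u)
    (φ : (Fin D → ℝ) → ℝ) (hφ : ContDiff ℝ (⊤ : ℕ∞) φ)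
    (hEL : ∀ x, box φ x + deriv U (φ x) = 0) :
    ∀ (ν : Fin D) (x : Fin D → ℝ),
      ∑ μ, pd (fun y =>
        (1/2) * (((D : ℝ) - 2) / 2) * eta D μ ν * (φ y)^2 +
          (1/2) * (∑ α, ∑ β, eta D α β * y α * y β) * EMTup U φ μ ν y -
          y ν * Jcur U φ μ y) μ x = 0 := by
  intro ν x
  have hX : Hpd (fun y : Fin D → ℝ => ∑ α, ee α * (y α * y α)) x (fun κ => 2 * (ee κ * x κ)) := by
    refine (Hpd.sum fun α => ((Hpd.coord α).mul (Hpd.coord α)).cmul (ee α)).congr' ?_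
    intro κ
    simp [mul_add, Finset.sum_add_distrib]
    ring
  have hH : ∀ μ, pd (fun y =>
        (1/2) * (((D : ℝ) - 2) / 2) * eta D μ ν * (φ y)^2 +
          (1/2) * (∑ α, ∑ β, eta D α β * y α * y β) * EMTup U φ μ ν y -
          y ν * Jcur U φ μ y) μ x =
      (if μ = ν then ((D : ℝ) - 2) / 2 * ee ν * φ x * pd φ ν x - Jcur U φ ν x - x ν * Lag U φ x
        else 0) + ee ν * pd φ ν x * (x μ * pd φ μ x)
       + (1/2) * (∑ α, ee α * (x α * x α)) * pd (EMTup U φ μ ν) μ x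
       - x ν * pd (Jcur U φ μ) μ x := by
    intro μ
    simp only [X_eq, pow_two]
    have h := (((((hpd_phi hφ x).mul (hpd_phi hφ x)).cmul
      ((1/2) * (((D : ℝ) - 2) / 2) * eta D μ ν)).add
      ((hX.cmul (1/2)).mul (⟨(hpd_T hU hφ x μ ν).1, fun _ => rfl⟩ :
        Hpd (EMTup U φ μ ν) x fun κ => pd (EMTup U φ μ ν) κ x))).sub
      ((Hpd.coord ν).mul (⟨(hpd_J hU hφ x μ).1, fun _ => rfl⟩ :
        Hpd (Jcur U φ μ) x fun κ => pd (Jcur U φ μ) κ x))).2 μ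
    rw [h]
    simp only [EMTup, pdu_eq, eta_eq]
    have h1 := ee_sq μ
    by_cases hm : μ = ν
    · subst hm
      simp only [if_true]
      linear_combination (ee μ * x μ * pd φ μ x * pd φ μ x - x μ * Lag U φ x) * h1
    · rw [if_neg hm, if_neg hm, if_neg (Ne.symm hm)]
      linear_combination (x μ * pd φ μ x * ee ν * pd φ ν x) * h1
  simp only [hH]
  rw [Finset.sum_sub_distrib, Finset.sum_add_distrib, Finset.sum_add_distrib, ← Finset.mul_sum,
    ← Finset.mul_sum, ← Finset.mul_sum, div_T hU hφ hEL, div_J hD2 hU hhom hφ hEL]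
  simp only [Finset.sum_ite_eq', Finset.mem_univ, if_true]
  rw [Jcur_eq]
  ring

end
end

section
/- Free Klein–Gordon theory satisfies the hypothesis of Theorem 3.4 and its current degenerates to the Energy–Momentum tensor: fix m ∈ ℝ with m ≠ 0 and consider the Klein–Gordon Lagrangian density L(x,u,p) := (1/2)·Σ_{μ,ν} η μ ν·p_μ·p_ν − (1/2)·m²·u². Then: (i) for every smooth field ψ : (Fin D → ℝ) → ℝ, every x, and every μ, one has Σ_ν η μ ν · L_{p_ν}(jψ x) = (−m^{-2}) · ∂_μ (fun y ↦ L_u(jψ y)) x (the proportionality condition of Theorem 3.4 with ρ = −m^{-2}); and (ii) for every smooth field φ, the associated tensor K^μ_ν x := L_{p_μ}(jφ x)·(Σ_α η ν α·L_{p_α}(jφ x)) − (1/2)·(if μ = ν then (−m^{-2})·(L_u(jφ x))² + Σ_{α,β} η α β·L_{p_α}(jφ x)·L_{p_β}(jφ x) else 0) equals pointwise the Energy–Momentum tensor T^μ_ν x := ∂^μ φ x·∂_ν φ x − (if μ = ν then (1/2)·Σ_{α,β} η α β·∂_α φ x·∂_β φ x − (1/2)·m²·(φ x)² else 0). -/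
open scoped BigOperators

noncomputable section

/-- Partial derivative of the Lagrangian density in its field argument `u`. -/
def Lu {D : ℕ} (L : (Fin D → ℝ) → ℝ → (Fin D → ℝ) → ℝ)
    (x : Fin D → ℝ) (u : ℝ) (p : Fin D → ℝ) : ℝ :=
  deriv (fun v => L x v p) u

/-- Partial derivative of the Lagrangian density in the μ-th component of `p`. -/
def Lp {D : ℕ} (L : (Fin D → ℝ) → ℝ → (Fin D → ℝ) → ℝ) (μ : Fin D)
    (x : Fin D → ℝ) (u : ℝ) (p : Fin D → ℝ) : ℝ :=
  fderiv ℝ (fun q => L x u q) p (Pi.single μ 1)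

def sg {D : ℕ} (μ : Fin D) : ℝ := if (μ : ℕ) = 0 then 1 else -1

lemma sg_sq {D : ℕ} (μ : Fin D) : sg μ * sg μ = 1 := by
  unfold sg; split_ifs <;> norm_num

lemma eta_sum {D : ℕ} (μ : Fin D) (f : Fin D → ℝ) :
    ∑ ν, eta D μ ν * f ν = sg μ * f μ := by
  simp [eta, sg]

lemma eta_sum2 {D : ℕ} (p : Fin D → ℝ) :
    ∑ μ, ∑ ν, eta D μ ν * p μ * p ν = ∑ μ, sg μ * p μ ^ 2 := by
  refine Finset.sum_congr rfl fun μ _ => ?_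
  have h := eta_sum μ (fun ν => p μ * p ν)
  simp only [← mul_assoc] at h
  rw [h]; ring

lemma Lu_kg {D : ℕ} (m : ℝ) (L : (Fin D → ℝ) → ℝ → (Fin D → ℝ) → ℝ)
    (hLdef : ∀ x u p, L x u p =
      (1/2) * (∑ μ, ∑ ν, eta D μ ν * p μ * p ν) - (1/2) * m^2 * u^2)
    (x : Fin D → ℝ) (u : ℝ) (p : Fin D → ℝ) : Lu L x u p = -(m^2) * u := by
  unfold Lu
  simp only [hLdef]
  have h := (((hasDerivAt_id u).pow 2).const_mul ((1/2) * m^2)).const_sub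
    ((1/2) * (∑ μ, ∑ ν, eta D μ ν * p μ * p ν))
  refine h.deriv.trans ?_
  simp; ring

lemma Lp_kg {D : ℕ} (m : ℝ) (L : (Fin D → ℝ) → ℝ → (Fin D → ℝ) → ℝ)
    (hLdef : ∀ x u p, L x u p =
      (1/2) * (∑ μ, ∑ ν, eta D μ ν * p μ * p ν) - (1/2) * m^2 * u^2)
    (μ : Fin D) (x : Fin D → ℝ) (u : ℝ) (p : Fin D → ℝ) :
    Lp L μ x u p = sg μ * p μ := by
  unfold Lp
  simp only [hLdef, eta_sum2]
  have h1 : ∀ i : Fin D, HasFDerivAt (fun q : Fin D → ℝ => sg i * q i ^ 2)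
      ((sg i * (2 * p i)) • (ContinuousLinearMap.proj (R := ℝ) (φ := fun _ : Fin D => ℝ) i)) p := by
    intro i
    have h := ((hasFDerivAt_apply (𝕜 := ℝ) i p).pow 2).const_mul (sg i)
    refine h.congr_fderiv ?_
    ext v
    simp
    try ring
  have h2 := ((HasFDerivAt.fun_sum (u := Finset.univ) fun i _ => h1 i).const_mul (1/2)).sub_const
    ((1/2) * m^2 * u^2)
  rw [h2.fderiv]
  simp [ContinuousLinearMap.sum_apply, Pi.single_apply]
  try ring

/-- The free Klein–Gordon theory satisfies the hypothesis of Theorem 3.4 with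
`ρ = -m⁻²`, and the resulting current `K^μ_ν` degenerates to the
Energy–Momentum tensor. -/
theorem klein_gordon_K_equals_T {D : ℕ} (hD : 1 ≤ D) (m : ℝ) (hm : m ≠ 0)
    (L : (Fin D → ℝ) → ℝ → (Fin D → ℝ) → ℝ)
    (hLdef : ∀ x u p, L x u p =
      (1/2) * (∑ μ, ∑ ν, eta D μ ν * p μ * p ν) - (1/2) * m^2 * u^2) :
    (∀ ψ : (Fin D → ℝ) → ℝ, ContDiff ℝ (⊤ : ℕ∞) ψ → ∀ (x : Fin D → ℝ) (μ : Fin D),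
      ∑ ν, eta D μ ν * Lp L ν x (ψ x) (grad ψ x) =
        (-(m^2)⁻¹) * pd (fun y => Lu L y (ψ y) (grad ψ y)) μ x) ∧
    (∀ φ : (Fin D → ℝ) → ℝ, ContDiff ℝ (⊤ : ℕ∞) φ → ∀ (μ ν : Fin D) (x : Fin D → ℝ),
      Lp L μ x (φ x) (grad φ x) * (∑ α, eta D ν α * Lp L α x (φ x) (grad φ x)) -
        (1/2) * (if μ = ν then
          (-(m^2)⁻¹) * (Lu L x (φ x) (grad φ x))^2 +
            ∑ α, ∑ β, eta D α β * Lp L α x (φ x) (grad φ x) * Lp L β x (φ x) (grad φ x)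
        else 0) =
      pdu φ μ x * pd φ ν x -
        (if μ = ν then
          (1/2) * (∑ α, ∑ β, eta D α β * pd φ α x * pd φ β x) - (1/2) * m^2 * (φ x)^2
        else 0)) := by
  simp only [Lu_kg m L hLdef, Lp_kg m L hLdef, eta_sum, eta_sum2, pdu, grad]
  have hm2 : m ^ 2 ≠ 0 := pow_ne_zero 2 hm
  refine ⟨fun ψ hψ x μ => ?_, fun φ hφ μ ν x => ?_⟩
  · have hd : DifferentiableAt ℝ ψ x := (hψ.differentiable (by simp)) x
    unfold pd
    rw [fderiv_const_mul hd, ← mul_assoc, sg_sq]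
    simp only [ContinuousLinearMap.smul_apply, smul_eq_mul]
    field_simp
  · have h3 : ∑ i : Fin D, sg i * (sg i * pd φ i x) ^ 2 = ∑ i : Fin D, sg i * pd φ i x ^ 2 :=
      Finset.sum_congr rfl fun i _ => by
        linear_combination (sg i * pd φ i x ^ 2) * sg_sq i
    rw [h3, ← mul_assoc (sg ν), sg_sq]
    split_ifs
    · field_simp
      ring
    · ring

end
end
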